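/- Let n ≥ 2 and k ≥ 2, and let G = C_{2n+1} #_{P_2} C_{2k} be the graph obtained from a cycle of length 2n+1 and a cycle of length 2k by identifying a path consisting of two consecutive edges of the first cycle with a path consisting of two consecutive edges of the second cycle (all other vertices being distinct), with vertex set and edge set the corresponding unions. Then m(G) = 3. (Equivalently, reg K[G] = 2n + 2k − 3.) -/

import Mathlib

/-!
Lower bound: modulo `2`, a sum of cuts is again a cut (of the symmetric difference). Interior
points of the cone satisfy `0 < x_e < α`, so for `α ≤ 2` all `x_e` equal `1`; then some cut contains
every edge and `G` is bipartite, which the odd cycle forbids (`bipartite_of_small_degree`).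

Upper bound: the witness is `(2, …, 2; 3)`. Call `A` good if its cut lies in a triple of cuts
covering every edge exactly twice. Subtracting the cut of a good `A` from the witness leaves a point
of the cone, so by averaging the witness is a positive combination of all good cuts plus a cone
point, hence interior as soon as the good cuts span (`twoThree_mem_interior`).

If deleting the edge `xy` makes `G` bipartite, every `A` separating `x` from `y` is good
(`good_of_separates`). Here any edge of the odd cycle not at `b` has this property
(`glued_delete_bipartite`). Every edge of `G` has an endpoint `v` of degree two; because the odd
cycle has at least five edges, such an `xy` exists avoiding `v`. Moving `v` across good cuts that
put its two neighbours on the same side, respectively on opposite sides, yields the sum and the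
difference of the two coordinate vectors at `v`, so the good cuts span (`single_mem_span`).
-/


/-! Basic definitions for cut monoids of finite simple graphs. -/

open Classical in
/-- The cut vector of a vertex set `A`, as a function on `Sym2 V`:
value `1` on pairs with exactly one element in `A`, and `0` otherwise. -/
noncomputable def cutVec {V : Type} (A : Set V) : Sym2 V → ℤ :=
  Sym2.lift ⟨fun v w => if ((v ∈ A) ↔ (w ∈ A)) then 0 else 1,
    fun v w => if_congr iff_comm rfl rfl⟩

variable {V : Type}

/-- The generators `(δ_A, 1)` of the cut monoid of `G`. -/
def cutGens (G : SimpleGraph V) : Set ((G.edgeSet → ℤ) × ℤ) :=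
  {p | ∃ A : Set V, p = (fun e => cutVec A e.1, 1)}

/-- The cut monoid `M_G` of a graph `G`. -/
def cutMonoid (G : SimpleGraph V) : AddSubmonoid ((G.edgeSet → ℤ) × ℤ) :=
  AddSubmonoid.closure (cutGens G)

/-- The group `gp(M_G)` generated by the cut monoid. -/
def cutGroup (G : SimpleGraph V) : AddSubgroup ((G.edgeSet → ℤ) × ℤ) :=
  AddSubgroup.closure (cutGens G)

/-- `M_G` is normal: every `x ∈ gp(M_G)` with `n • x ∈ M_G` for some `n ≥ 1` lies in `M_G`. -/
def CutNormal (G : SimpleGraph V) : Prop :=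
  ∀ x ∈ cutGroup G, (∃ n : ℕ, 1 ≤ n ∧ n • x ∈ cutMonoid G) → x ∈ cutMonoid G

/-- `M_G` is seminormal: every `x ∈ gp(M_G)` with `2 • x ∈ M_G` and `3 • x ∈ M_G`
lies in `M_G`. -/
def CutSeminormal (G : SimpleGraph V) : Prop :=
  ∀ x ∈ cutGroup G, 2 • x ∈ cutMonoid G → 3 • x ∈ cutMonoid G → x ∈ cutMonoid G

/-- Generators of the cone of `M_G`: nonnegative real multiples of the `(δ_A, 1)`. -/
noncomputable def cutConeGens (G : SimpleGraph V) : Set ((G.edgeSet → ℝ) × ℝ) :=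
  {q | ∃ (c : ℝ) (A : Set V), 0 ≤ c ∧
    q = c • ((fun e => ((cutVec A e.1 : ℤ) : ℝ), (1 : ℝ)))}

/-- The cone `cone(M_G)`: all finite nonnegative real combinations of the `(δ_A, 1)`. -/
noncomputable def cutCone (G : SimpleGraph V) : Set ((G.edgeSet → ℝ) × ℝ) :=
  (AddSubmonoid.closure (cutConeGens G) : Set ((G.edgeSet → ℝ) × ℝ))

/-- The canonical map from `ℤ^E × ℤ` to `ℝ^E × ℝ`. -/
noncomputable def toRealCut (G : SimpleGraph V) (p : (G.edgeSet → ℤ) × ℤ) :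
    (G.edgeSet → ℝ) × ℝ :=
  (fun e => ((p.1 e : ℤ) : ℝ), ((p.2 : ℤ) : ℝ))

/-- `int(M_G)`: elements of `M_G` mapping into the topological interior of `cone(M_G)`. -/
noncomputable def cutInterior (G : SimpleGraph V) : Set ((G.edgeSet → ℤ) × ℤ) :=
  {p | p ∈ cutMonoid G ∧ toRealCut G p ∈ interior (cutCone G)}

/-- The set of last coordinates `α ∈ ℕ` realized by elements of `int(M_G)`;
its least element is `m(G)`. -/
noncomputable def cutDegrees (G : SimpleGraph V) : Set ℕ :=
  {α | ∃ x : G.edgeSet → ℤ, ((x, (α : ℤ)) : (G.edgeSet → ℤ) × ℤ) ∈ cutInterior G}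

/-- `H` is a minor of `G`: branch sets `B u` are nonempty, pairwise disjoint,
induce connected subgraphs, and edges of `H` are witnessed by edges of `G`. -/
def GraphMinor {W V : Type} (H : SimpleGraph W) (G : SimpleGraph V) : Prop :=
  ∃ B : W → Set V,
    (∀ u, (B u).Nonempty) ∧
    (∀ u v, u ≠ v → Disjoint (B u) (B v)) ∧
    (∀ u, (G.induce (B u)).Connected) ∧
    (∀ u v, H.Adj u v → ∃ a ∈ B u, ∃ b ∈ B v, G.Adj a b)

/-- `G` is `K₅`-minor-free. -/
def K5Free (G : SimpleGraph V) : Prop :=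
  ¬ GraphMinor (⊤ : SimpleGraph (Fin 5)) G

/-- `G` is bipartite: vertices split into two parts so every edge joins the parts. -/
def BipartiteG (G : SimpleGraph V) : Prop :=
  ∃ s : Set V, ∀ ⦃v w⦄, G.Adj v w → ((v ∈ s ∧ w ∉ s) ∨ (w ∈ s ∧ v ∉ s))

/-- `G` has an induced cycle of length `n` (n ≥ 3): an induced-subgraph copy of the
cycle graph of length `n`. -/
def HasInducedCycleLen (G : SimpleGraph V) (n : ℕ) : Prop :=
  3 ≤ n ∧ Nonempty (SimpleGraph.cycleGraph n ↪g G)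

/-- `G` contains a triangle. -/
def HasTriangle (G : SimpleGraph V) : Prop :=
  ∃ a b c, G.Adj a b ∧ G.Adj b c ∧ G.Adj a c

/-- `G` is chordal: every induced cycle is a triangle. -/
def ChordalG (G : SimpleGraph V) : Prop :=
  ∀ n, HasInducedCycleLen G n → n = 3

/-- `G` is bridgeless: every edge lies on some cycle. -/
def BridgelessG (G : SimpleGraph V) : Prop :=
  ∀ e ∈ G.edgeSet, ∃ (v : V) (c : G.Walk v v), c.IsCycle ∧ e ∈ c.edges

/-- `G` is (isomorphic to) a cycle of length `n`. -/
def IsCycleOfLen (G : SimpleGraph V) (n : ℕ) : Prop :=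
  3 ≤ n ∧ Nonempty (G ≃g SimpleGraph.cycleGraph n)

/-- `G` is a cycle. -/
def IsCycleGraph (G : SimpleGraph V) : Prop :=
  ∃ n, IsCycleOfLen G n

/-- `G` is a `0`-sum of `G1` and `G2`: copies of `G1`, `G2` cover `G`,
overlap in exactly one vertex, and every edge comes from `G1` or `G2`. -/
def IsZeroSumDecomp {V1 V2 : Type} (G : SimpleGraph V) (G1 : SimpleGraph V1)
    (G2 : SimpleGraph V2) : Prop :=
  ∃ (f1 : V1 ↪ V) (f2 : V2 ↪ V),
    Set.range f1 ∪ Set.range f2 = Set.univ ∧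
    (∃ v, Set.range f1 ∩ Set.range f2 = {v}) ∧
    (∀ a b, G.Adj a b ↔
      ((∃ x y, f1 x = a ∧ f1 y = b ∧ G1.Adj x y) ∨
       (∃ x y, f2 x = a ∧ f2 y = b ∧ G2.Adj x y)))

/-- `G` is a `1`-sum of `G1` and `G2` along a common edge. -/
def IsOneSumDecomp {V1 V2 : Type} (G : SimpleGraph V) (G1 : SimpleGraph V1)
    (G2 : SimpleGraph V2) : Prop :=
  ∃ (f1 : V1 ↪ V) (f2 : V2 ↪ V) (v w : V),
    v ≠ w ∧
    Set.range f1 ∪ Set.range f2 = Set.univ ∧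
    Set.range f1 ∩ Set.range f2 = {v, w} ∧
    (∃ x y, f1 x = v ∧ f1 y = w ∧ G1.Adj x y) ∧
    (∃ x y, f2 x = v ∧ f2 y = w ∧ G2.Adj x y) ∧
    (∀ a b, G.Adj a b ↔
      ((∃ x y, f1 x = a ∧ f1 y = b ∧ G1.Adj x y) ∨
       (∃ x y, f2 x = a ∧ f2 y = b ∧ G2.Adj x y)))

/-- Ring graphs: obtained, up to adding isolated vertices, from finitely many
(finite) trees and cycles by iterated `0`-sums and `1`-sums. -/
inductive IsRingGraph : {V : Type} → SimpleGraph V → Prop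
  | tree {V : Type} (G : SimpleGraph V) :
      Finite V → G.Connected → G.IsAcyclic → IsRingGraph G
  | cycle {V : Type} (G : SimpleGraph V) : IsCycleGraph G → IsRingGraph G
  | zeroSum {V1 V2 V : Type} {G1 : SimpleGraph V1} {G2 : SimpleGraph V2}
      {G : SimpleGraph V} :
      IsRingGraph G1 → IsRingGraph G2 → IsZeroSumDecomp G G1 G2 → IsRingGraph G
  | oneSum {V1 V2 V : Type} {G1 : SimpleGraph V1} {G2 : SimpleGraph V2}
      {G : SimpleGraph V} :
      IsRingGraph G1 → IsRingGraph G2 → IsOneSumDecomp G G1 G2 → IsRingGraph G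
  | addIsolated {V W : Type} {G : SimpleGraph V} {H : SimpleGraph W} (f : V ↪ W) :
      IsRingGraph G → (∀ a b, H.Adj a b ↔ ∃ x y, f x = a ∧ f y = b ∧ G.Adj x y) →
      IsRingGraph H

/-- An edge of an induced subgraph is an edge of the ambient graph. -/
lemma induce_edge_mem (G : SimpleGraph V) (s : Set V) (e : Sym2 s)
    (he : e ∈ (G.induce s).edgeSet) : e.map Subtype.val ∈ G.edgeSet := by
  induction e using Sym2.ind with
  | _ a b =>
    rw [Sym2.map_pair_eq, SimpleGraph.mem_edgeSet]
    exact he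

/-- Restriction of a vector indexed by the edges of `G` to the edges of the
subgraph of `G` induced on `s`. -/
noncomputable def restrictCut (G : SimpleGraph V) (s : Set V) (p : G.edgeSet → ℤ) :
    (G.induce s).edgeSet → ℤ :=
  fun e => p ⟨e.1.map Subtype.val, induce_edge_mem G s e.1 e.2⟩

/-! ### The cone and the lower bound -/

theorem cutVec_mk (A : Set V) (p q : V) [Decidable (p ∈ A ↔ q ∈ A)] :
    cutVec A s(p, q) = if (p ∈ A ↔ q ∈ A) then 0 else 1 := by
  simp only [cutVec, Sym2.lift_mk]
  congr

/-- The real generator of the cone attached to the cut of `A`. -/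
noncomputable def realCut (G : SimpleGraph V) (A : Set V) : (G.edgeSet → ℝ) × ℝ :=
  (fun e => ((cutVec A e.1 : ℤ) : ℝ), 1)

theorem cutCone_smul (G : SimpleGraph V) {r : ℝ} (hr : 0 ≤ r) {p : (G.edgeSet → ℝ) × ℝ}
    (hp : p ∈ cutCone G) : r • p ∈ cutCone G := by
  change p ∈ AddSubmonoid.closure _ at hp
  change _ ∈ AddSubmonoid.closure _
  induction hp using AddSubmonoid.closure_induction with
  | mem x hx =>
    obtain ⟨s, A, hs, rfl⟩ := hx
    exact AddSubmonoid.subset_closure ⟨r * s, A, mul_nonneg hr hs, smul_smul _ _ _⟩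
  | zero => simp
  | add x y _ _ hx hy => rw [smul_add]; exact add_mem hx hy

theorem realCut_mem (G : SimpleGraph V) (A : Set V) : realCut G A ∈ cutCone G :=
  AddSubmonoid.subset_closure ⟨1, A, zero_le_one, (one_smul _ _).symm⟩

/-- Every point of the cone satisfies `0 ≤ x_e ≤ α`. -/
theorem cutCone_bounds (G : SimpleGraph V) {p : (G.edgeSet → ℝ) × ℝ}
    (hp : p ∈ cutCone G) (e : G.edgeSet) : 0 ≤ p.1 e ∧ p.1 e ≤ p.2 := by
  classical
  change p ∈ AddSubmonoid.closure _ at hp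
  induction hp using AddSubmonoid.closure_induction with
  | mem x hx =>
    obtain ⟨s, A, hs, rfl⟩ := hx
    obtain ⟨e, he⟩ := e
    induction e using Sym2.ind with
    | _ p q =>
      simp only [Prod.smul_mk, Pi.smul_apply, cutVec_mk, smul_eq_mul]
      split_ifs <;> simp [hs]
  | zero => simp
  | add x y _ _ hx hy =>
    simp only [Prod.fst_add, Pi.add_apply, Prod.snd_add]
    constructor <;> linarith [hx.1, hx.2, hy.1, hy.2]

/-- On the interior the bounds of `cutCone_bounds` are strict: the coordinate `x_e` can be moved
both ways inside the cone. -/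
theorem cutCone_interior_bounds (G : SimpleGraph V) [Finite V] {p : (G.edgeSet → ℝ) × ℝ}
    (hp : p ∈ interior (cutCone G)) (e : G.edgeSet) : 0 < p.1 e ∧ p.1 e < p.2 := by
  classical
  have hc : Continuous fun t : ℝ => p + t • ((Pi.single e 1, 0) : (G.edgeSet → ℝ) × ℝ) := by
    fun_prop
  have h0 : ∀ᶠ t : ℝ in nhds 0,
      p + t • ((Pi.single e 1, 0) : (G.edgeSet → ℝ) × ℝ) ∈ cutCone G := by
    refine hc.continuousAt.eventually_mem ?_
    simpa using mem_interior_iff_mem_nhds.1 hp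
  obtain ⟨ε, hε, h⟩ := Metric.eventually_nhds_iff.1 h0
  have h1 := cutCone_bounds G (@h (ε / 2) (by simp [abs_of_pos hε, hε])) e
  have h2 := cutCone_bounds G (@h (-(ε / 2)) (by simp [abs_of_pos hε, hε])) e
  simp at h1 h2
  constructor <;> linarith [h1.2, h2.1]

/-- A sum of cuts agrees modulo `2` with a single cut, that of the symmetric difference. -/
theorem cutMonoid_parity (G : SimpleGraph V) {p : (G.edgeSet → ℤ) × ℤ}
    (hp : p ∈ cutMonoid G) : ∃ A : Set V, ∀ e : G.edgeSet, (2 : ℤ) ∣ p.1 e - cutVec A e.1 := by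
  classical
  change p ∈ AddSubmonoid.closure _ at hp
  induction hp using AddSubmonoid.closure_induction with
  | mem x hx =>
    obtain ⟨A, rfl⟩ := hx
    exact ⟨A, by simp⟩
  | zero =>
    refine ⟨∅, fun ⟨e, he⟩ => ?_⟩
    induction e using Sym2.ind with
    | _ p q => simp [cutVec_mk]
  | add x y _ _ hx hy =>
    obtain ⟨A, hA⟩ := hx
    obtain ⟨B, hB⟩ := hy
    refine ⟨symmDiff A B, fun e => ?_⟩
    have h1 := hA e
    have h2 := hB e
    obtain ⟨e, he⟩ := e
    induction e using Sym2.ind with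
    | _ p q =>
      simp only [cutVec_mk, Prod.fst_add, Pi.add_apply, Set.mem_symmDiff] at *
      by_cases a1 : p ∈ A <;> by_cases a2 : q ∈ A <;> by_cases a3 : p ∈ B <;>
        by_cases a4 : q ∈ B <;> simp [a1, a2, a3, a4] at * <;> omega

/-- If `int(M_G)` has an element of height at most `2`, then `G` is bipartite. -/
theorem bipartite_of_small_degree (G : SimpleGraph V) [Finite V]
    {α : ℕ} (hα : α ∈ cutDegrees G) (h3 : α < 3) :
    ∃ A : Set V, ∀ p q, G.Adj p q → (p ∈ A ↔ q ∉ A) := by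
  classical
  obtain ⟨x, hx, hint⟩ := hα
  have hb := fun e => cutCone_interior_bounds G hint e
  simp only [toRealCut] at hb
  -- The only integer strictly between `0` and `α ≤ 2` is `1`.
  have hone : ∀ e, x e = 1 := fun e => by
    obtain ⟨h1, h2⟩ := hb e
    have h1' : 0 < x e := by exact_mod_cast h1
    have h2' : x e < (α : ℤ) := by exact_mod_cast h2
    omega
  obtain ⟨A, hA⟩ := cutMonoid_parity G hx
  refine ⟨A, fun p q h => ?_⟩
  have := hA ⟨s(p, q), h⟩
  simp only [hone, cutVec_mk] at this
  by_cases h1 : p ∈ A <;> by_cases h2 : q ∈ A <;> simp_all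

/-! ### Good cuts and interior points -/

/-- `A` belongs to a triple of cuts covering every edge exactly twice. -/
def Good (G : SimpleGraph V) (A : Set V) : Prop :=
  ∃ B C : Set V, ∀ e ∈ G.edgeSet, cutVec A e + cutVec B e + cutVec C e = 2

/-- If `G` is bipartite after deleting the edge `xy`, then every `A` separating `x` from `y` is
good: complete it by the bipartition `f` and by `A ∆ f`. -/
theorem good_of_separates (G : SimpleGraph V) {x y : V} {f : Set V}
    (hf : ∀ p q, G.Adj p q → s(p, q) ≠ s(x, y) → (p ∈ f ↔ q ∉ f)) {A : Set V}
    (hA : x ∈ A ↔ y ∉ A) : Good G A := by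
  classical
  refine ⟨f, symmDiff A f, fun e he => ?_⟩
  induction e using Sym2.ind with
  | _ p q =>
    have key : (p ∈ f ↔ q ∉ f) ∨ (p ∈ A ↔ q ∉ A) := by
      by_cases h : s(p, q) = s(x, y)
      · right
        rcases Sym2.eq_iff.1 h with ⟨rfl, rfl⟩ | ⟨rfl, rfl⟩ <;> tauto
      · exact Or.inl (hf p q he h)
    simp only [cutVec_mk, Set.mem_symmDiff]
    by_cases a1 : p ∈ A <;> by_cases a2 : q ∈ A <;> by_cases a3 : p ∈ f <;>
        by_cases a4 : q ∈ f <;> simp [a1, a2, a3, a4] at *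

/-- The point with all edge coordinates `2` and height `3`. -/
noncomputable def twoThree (G : SimpleGraph V) : (G.edgeSet → ℝ) × ℝ := (fun _ => 2, 3)

theorem good_sub_mem (G : SimpleGraph V) {A : Set V} (hA : Good G A) :
    twoThree G - realCut G A ∈ cutCone G := by
  obtain ⟨B, C, h⟩ := hA
  have : twoThree G - realCut G A = realCut G B + realCut G C := by
    ext e
    · have := h e.1 e.2
      have : (cutVec A e.1 : ℝ) + cutVec B e.1 + cutVec C e.1 = 2 := by exact_mod_cast this
      simp [twoThree, realCut]; linarith
    · simp [twoThree, realCut]; norm_num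
  rw [this]
  exact add_mem (S := AddSubmonoid _) (realCut_mem G B) (realCut_mem G C)

/-- If the good cuts span the whole space, then `(2, …, 2; 3)` is interior to the cone: each good
cut can be subtracted from it within the cone, so averaging writes it as a cone point plus a
combination of the good cuts with positive coefficients, which may be perturbed freely. -/
theorem twoThree_mem_interior (G : SimpleGraph V) [Finite V] {A₀ : Set V} (hA₀ : Good G A₀)
    (hspan : ⊤ ≤ Submodule.span ℝ {p | ∃ A, Good G A ∧ p = realCut G A}) :
    twoThree G ∈ interior (cutCone G) := by
  classical
  have : Fintype {A : Set V // Good G A} := Fintype.ofFinite _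
  have : Nonempty {A : Set V // Good G A} := ⟨⟨A₀, hA₀⟩⟩
  set N : ℝ := (Fintype.card {A : Set V // Good G A} : ℝ) with hN
  have hNpos : 0 < N := by rw [hN]; exact_mod_cast Fintype.card_pos
  let L : ({A : Set V // Good G A} → ℝ) →ₗ[ℝ] (G.edgeSet → ℝ) × ℝ :=
    Fintype.linearCombination ℝ (fun A => realCut G A.1)
  have hsurj : Function.Surjective L := by
    rw [← LinearMap.range_eq_top, Fintype.range_linearCombination, eq_top_iff]
    refine hspan.trans (Submodule.span_mono ?_)
    rintro p ⟨A, hA, rfl⟩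
    exact ⟨⟨A, hA⟩, rfl⟩
  have hopen : IsOpenMap L := L.isOpenMap_of_finiteDimensional hsurj
  let F : ({A : Set V // Good G A} → ℝ) → (G.edgeSet → ℝ) × ℝ := fun w => twoThree G + L w
  have hF : IsOpenMap F := (Homeomorph.addLeft (twoThree G)).isOpenMap.comp hopen
  refine mem_interior.2 ⟨F '' Metric.ball 0 (1 / N), ?_, hF _ Metric.isOpen_ball,
    ⟨0, Metric.mem_ball_self (by positivity), by simp [F]⟩⟩
  rintro _ ⟨w, hw, rfl⟩
  have hw' : ∀ A, 0 ≤ 1 / N + w A := fun A => by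
    have h1 := (norm_le_pi_norm w A).trans_lt (mem_ball_zero_iff.1 hw)
    rw [Real.norm_eq_abs] at h1
    linarith [neg_abs_le (w A)]
  have hdec : F w = ∑ A : {A : Set V // Good G A},
      ((1 / N) • (twoThree G - realCut G A.1) + (1 / N + w A) • realCut G A.1) := by
    have : ∀ A : {A : Set V // Good G A},
        (1 / N) • (twoThree G - realCut G A.1) + (1 / N + w A) • realCut G A.1
          = (1 / N) • twoThree G + w A • realCut G A.1 := fun A => by module
    simp only [this, Finset.sum_add_distrib, Finset.sum_const, Finset.card_univ, F, L,
      Fintype.linearCombination_apply]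
    rw [← Nat.cast_smul_eq_nsmul ℝ, smul_smul, ← hN, mul_one_div_cancel hNpos.ne', one_smul]
  rw [hdec]
  refine AddSubmonoid.sum_mem _ fun A _ => ?_
  exact add_mem (S := AddSubmonoid _) (cutCone_smul G (by positivity) (good_sub_mem G A.2))
    (cutCone_smul G (hw' A) (realCut_mem G A.1))

/-- The situation at an edge `vu` that makes its coordinate vector a combination of good cuts:
`v` has exactly the two neighbours `u` and `w`, and deleting some edge `xy` avoiding `v`
and different from `uw` leaves a bipartite graph. -/
def LocalAt (G : SimpleGraph V) (v u : V) : Prop :=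
  ∃ w x y : V, ∃ f : Set V, u ≠ w ∧ (∀ z, G.Adj v z ↔ z = u ∨ z = w) ∧ x ≠ v ∧ y ≠ v ∧ x ≠ y ∧
    s(x, y) ≠ s(u, w) ∧ ∀ p q, G.Adj p q → s(p, q) ≠ s(x, y) → (p ∈ f ↔ q ∉ f)

/-- Given an edge `xy` avoiding `v` and different from `uw`, a set separating `x` from `y` can still
place `u` and `w` on the same side or on opposite sides. -/
theorem exists_separating {u w x y : V} (huw : u ≠ w) (hxy : x ≠ y) (h : s(x, y) ≠ s(u, w))
    (v : V) (hu : u ≠ v) (hw : w ≠ v) (hx : x ≠ v) (hy : y ≠ v) :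
    (∃ A : Set V, (x ∈ A ↔ y ∉ A) ∧ v ∉ A ∧ u ∈ A ∧ w ∈ A) ∧
    (∃ A : Set V, (x ∈ A ↔ y ∉ A) ∧ v ∉ A ∧ u ∈ A ∧ w ∉ A) := by
  have h' : (x ≠ u ∧ x ≠ w) ∨ (y ≠ u ∧ y ≠ w) := by
    by_contra hc
    apply h
    rw [Sym2.eq_iff]
    grind
  constructor
  · rcases h' with ⟨h1, h2⟩ | ⟨h1, h2⟩
    · exact ⟨{x, v}ᶜ, by simp [*, hxy.symm], by simp, by simp [*, h1.symm], by simp [*, h2.symm]⟩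
    · exact ⟨{y, v}ᶜ, by simp [*], by simp, by simp [*, h1.symm], by simp [*, h2.symm]⟩
  · rcases h' with ⟨h1, h2⟩ | ⟨h1, h2⟩
    · by_cases hyu : y = u
      · exact ⟨{u}, by simp [*], by simp [hu.symm], by simp, by simp [huw.symm]⟩
      · exact ⟨{u, x}, by simp [*, hxy.symm], by simp [hu.symm, hx.symm], by simp,
          by simp [huw.symm, h2.symm]⟩
    · by_cases hxu : x = u
      · exact ⟨{u}, by simp [*], by simp [hu.symm], by simp, by simp [huw.symm]⟩
      · exact ⟨{u, y}, by simp [*], by simp [hu.symm, hy.symm], by simp,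
          by simp [huw.symm, h2.symm]⟩

/-- Moving a vertex `v` with the two neighbours `u`, `w` across the cut changes only the
coordinates of `vu` and `vw`, the latter with a sign telling whether `w` lies on the side of `u`. -/
theorem realCut_sub_insert (G : SimpleGraph V) [DecidableEq G.edgeSet] {v u w : V}
    (hv : ∀ z, G.Adj v z ↔ z = u ∨ z = w) (huw : u ≠ w) (hu : G.Adj v u) (hw : G.Adj v w)
    {A : Set V} (hvA : v ∉ A) (huA : u ∈ A) [Decidable (w ∈ A)] :
    realCut G A - realCut G (insert v A) =
      (Pi.single ⟨s(v, u), hu⟩ 1, 0) +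
        (if w ∈ A then (1 : ℝ) else -1) • (Pi.single ⟨s(v, w), hw⟩ 1, 0) := by
  classical
  ext e
  · obtain ⟨e, he⟩ := e
    simp only [realCut, Prod.fst_sub, Pi.sub_apply, Prod.fst_add, Pi.add_apply, Prod.smul_fst,
      Pi.smul_apply, Pi.single_apply]
    by_cases hve : v ∈ e
    · obtain ⟨z, rfl⟩ := Sym2.mem_iff_exists.1 hve
      have hvz : v ≠ z := G.ne_of_adj he
      rcases (hv z).1 he with rfl | rfl
      · have : (⟨s(v, z), he⟩ : G.edgeSet) ≠ ⟨s(v, w), hw⟩ := fun h =>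
          huw (Sym2.congr_right.1 (congrArg Subtype.val h))
        simp [cutVec_mk, hvA, huA, this, hvz.symm]
      · have : (⟨s(v, z), he⟩ : G.edgeSet) ≠ ⟨s(v, u), hu⟩ := fun h =>
          huw (Sym2.congr_right.1 (congrArg Subtype.val h)).symm
        by_cases hzA : z ∈ A <;> simp [cutVec_mk, hvA, hzA, this, hvz.symm]
    · have h1 : (⟨e, he⟩ : G.edgeSet) ≠ ⟨s(v, u), hu⟩ := fun h =>
        hve (by rw [show e = s(v, u) from congrArg Subtype.val h]; simp)
      have h2 : (⟨e, he⟩ : G.edgeSet) ≠ ⟨s(v, w), hw⟩ := fun h =>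
        hve (by rw [show e = s(v, w) from congrArg Subtype.val h]; simp)
      induction e using Sym2.ind with
      | _ p q =>
        simp only [Sym2.mem_iff, not_or] at hve
        simp [cutVec_mk, h1, h2, Ne.symm hve.1, Ne.symm hve.2]
  · simp only [realCut, Prod.snd_sub, Prod.snd_add, Prod.smul_snd]
    simp

/-- The two configurations of `u`, `w` in `exists_separating` give the sum and the difference of
the coordinate vectors of `vu` and `vw`. -/
theorem single_mem_span (G : SimpleGraph V) [DecidableEq G.edgeSet] {v u : V} (hu : G.Adj v u)
    (h : LocalAt G v u) :
    ((Pi.single ⟨s(v, u), hu⟩ 1, 0) : (G.edgeSet → ℝ) × ℝ) ∈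
      Submodule.span ℝ {p | ∃ A, Good G A ∧ p = realCut G A} := by
  classical
  obtain ⟨w, x, y, f, huw, hv, hx, hy, hxy, hne, hf⟩ := h
  have hw : G.Adj v w := (hv w).2 (Or.inr rfl)
  obtain ⟨⟨A, hA, hvA, huA, hwA⟩, ⟨B, hB, hvB, huB, hwB⟩⟩ :=
    exists_separating huw hxy hne v hu.ne' hw.ne' hx hy
  have good : ∀ C : Set V, (x ∈ C ↔ y ∉ C) →
      realCut G C - realCut G (insert v C) ∈
        Submodule.span ℝ {p | ∃ A, Good G A ∧ p = realCut G A} := fun C hC =>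
    sub_mem (Submodule.subset_span ⟨C, good_of_separates G hf hC, rfl⟩)
      (Submodule.subset_span ⟨insert v C,
        good_of_separates G hf (by simpa [hx, hy] using hC), rfl⟩)
  have h1 := good A hA
  have h2 := good B hB
  rw [realCut_sub_insert G hv huw hu hw hvA huA, if_pos hwA] at h1
  rw [realCut_sub_insert G hv huw hu hw hvB huB, if_neg hwB] at h2
  have h3 := Submodule.smul_mem _ (1 / 2 : ℝ) (add_mem h1 h2)
  convert h3 using 1
  module

theorem three_mem_cutDegrees (G : SimpleGraph V) [Finite V] {a b : V} (hab : G.Adj a b)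
    (hloc : ∀ p q, G.Adj p q → LocalAt G p q ∨ LocalAt G q p) : 3 ∈ cutDegrees G := by
  classical
  have : Fintype G.edgeSet := Fintype.ofFinite _
  obtain ⟨A₀, hA₀⟩ : ∃ A, Good G A := by
    have : ∀ v u, LocalAt G v u → ∃ A, Good G A := by
      rintro v u ⟨w, x, y, f, _, _, _, _, hxy, _, hf⟩
      exact ⟨{x}, good_of_separates G hf (by simp [hxy.symm])⟩
    rcases hloc a b hab with h | h <;> exact this _ _ h
  set S := Submodule.span ℝ {p | ∃ A, Good G A ∧ p = realCut G A} with hS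
  have hsing : ∀ e : G.edgeSet, ((Pi.single e 1, 0) : (G.edgeSet → ℝ) × ℝ) ∈ S := by
    rintro ⟨e, he⟩
    induction e using Sym2.ind with
    | _ p q =>
      rcases hloc p q he with h | h
      · exact single_mem_span G he h
      · have h1 := single_mem_span G (he.symm) h
        have : (⟨s(q, p), he.symm⟩ : G.edgeSet) = ⟨s(p, q), he⟩ := Subtype.ext Sym2.eq_swap
        rwa [this] at h1
  have hfst : ∀ g : G.edgeSet → ℝ, ((g, 0) : (G.edgeSet → ℝ) × ℝ) ∈ S := fun g => by
    have : ((g, 0) : (G.edgeSet → ℝ) × ℝ) =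
        ∑ e, g e • ((Pi.single e 1, 0) : (G.edgeSet → ℝ) × ℝ) := by
      ext e
      · simp [Prod.fst_sum, Finset.sum_apply, Pi.single_apply]
      · simp [Prod.snd_sum]
    rw [this]
    exact sum_mem fun e _ => S.smul_mem _ (hsing e)
  have htop : ⊤ ≤ S := by
    rintro ⟨g, t⟩ -
    have h1 : realCut G A₀ ∈ S := Submodule.subset_span ⟨A₀, hA₀, rfl⟩
    have h2 := add_mem (hfst (g - t • (realCut G A₀).1)) (S.smul_mem t h1)
    convert h2 using 1
    ext <;> simp [realCut]
  refine ⟨fun _ => 2, ?_, ?_⟩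
  · obtain ⟨B, C, h⟩ := hA₀
    have : ((fun _ => 2, ((3 : ℕ) : ℤ)) : (G.edgeSet → ℤ) × ℤ) =
        (fun e => cutVec A₀ e.1, 1) + (fun e => cutVec B e.1, 1) + (fun e => cutVec C e.1, 1) := by
      ext e
      · simp [h e.1 e.2]
      · simp
    rw [this]
    exact add_mem (add_mem (AddSubmonoid.subset_closure ⟨_, rfl⟩)
      (AddSubmonoid.subset_closure ⟨_, rfl⟩)) (AddSubmonoid.subset_closure ⟨_, rfl⟩)
  · have := twoThree_mem_interior G hA₀ htop
    simpa [toRealCut, twoThree] using this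

/-! ### Cycles and the glued graph -/

/-- Coordinates on a cycle of length `m`: a labelling of the vertices by `0, …, m - 1` for which
adjacency is cyclic consecutiveness. -/
theorem exists_cycle_coord {W : Type} {H : SimpleGraph W} {m : ℕ} (h : IsCycleOfLen H m) :
    ∃ i : W → ℕ, Function.Injective i ∧ (∀ x, i x < m) ∧ (∀ t < m, ∃ x, i x = t) ∧
      ∀ x y, H.Adj x y ↔ (i x + 1 = i y ∨ i y + 1 = i x ∨ (i x = 0 ∧ i y + 1 = m) ∨
        (i y = 0 ∧ i x + 1 = m)) := by
  obtain ⟨h3, ⟨e⟩⟩ := h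
  refine ⟨fun x => (e x).val, fun x y hxy => e.injective (Fin.ext hxy), fun x => (e x).isLt,
    fun t ht => ⟨e.symm ⟨t, ht⟩, by simp⟩, fun x y => ?_⟩
  rw [← e.map_adj_iff, SimpleGraph.cycleGraph_adj']
  have hx := (e x).isLt
  have hy := (e y).isLt
  have h1 := Fin.intCast_val_sub_eq_sub_add_ite (e x) (e y)
  have h2 := Fin.intCast_val_sub_eq_sub_add_ite (e y) (e x)
  simp only [Fin.le_def] at h1 h2
  split_ifs at h1 h2 <;> dsimp only <;> omega

section Cycle

variable {W : Type} {H : SimpleGraph W} {m : ℕ}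

theorem cycle_no_triangle (h : IsCycleOfLen H m) (hm : 4 ≤ m) {p q r : W}
    (h1 : H.Adj p q) (h2 : H.Adj q r) (h3 : H.Adj p r) : False := by
  obtain ⟨i, -, hlt, -, hadj⟩ := exists_cycle_coord h
  rw [hadj] at h1 h2 h3
  have := hlt p
  have := hlt q
  have := hlt r
  omega

theorem cycle_neighbors (h : IsCycleOfLen H m) (v : W) :
    ∃ u w, u ≠ w ∧ ∀ z, H.Adj v z ↔ z = u ∨ z = w := by
  have h3 := h.1
  obtain ⟨i, hinj, hlt, hsurj, hadj⟩ := exists_cycle_coord h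
  have hv := hlt v
  obtain ⟨u, hu⟩ := hsurj (if i v + 1 = m then 0 else i v + 1) (by split_ifs <;> omega)
  obtain ⟨w, hw⟩ := hsurj (if i v = 0 then m - 1 else i v - 1) (by split_ifs <;> omega)
  refine ⟨u, w, fun huw => ?_, fun z => ?_⟩
  · rw [huw, hw] at hu
    split_ifs at hu <;> omega
  · have := hlt z
    rw [hadj, ← hinj.eq_iff, ← hinj.eq_iff (b := w), hu, hw]
    split_ifs <;> omega

/-- A cycle becomes bipartite when an edge is deleted: number the vertices along the remaining
path and colour them by parity. -/
theorem cycle_delete_bipartite (h : IsCycleOfLen H m) {x y : W} (hxy : H.Adj x y) :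
    ∃ f : Set W, ∀ p q, H.Adj p q → s(p, q) ≠ s(x, y) → (p ∈ f ↔ q ∉ f) := by
  have h3 := h.1
  obtain ⟨i, hinj, hlt, -, hadj⟩ := exists_cycle_coord h
  have key : ∀ x y, (i x + 1 = i y ∨ (i y = 0 ∧ i x + 1 = m)) →
      ∃ f : Set W, ∀ p q, H.Adj p q → s(p, q) ≠ s(x, y) → (p ∈ f ↔ q ∉ f) := by
    intro x y hxy
    -- The path starts at `y`, just after `x`; vertices up to `x` come after a full turn.
    refine ⟨{z | (if i z ≤ i x then i z + m else i z) % 2 = 0}, fun p q hpq hne => ?_⟩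
    rw [hadj] at hpq
    have hne' : ¬ (i p = i x ∧ i q = i y) ∧ ¬ (i p = i y ∧ i q = i x) := by
      constructor <;> rintro ⟨e1, e2⟩ <;> apply hne <;> rw [hinj e1, hinj e2]
      exact Sym2.eq_swap
    have := hlt p
    have := hlt q
    have := hlt x
    have := hlt y
    simp only [Set.mem_ofPred_eq]
    split_ifs <;> omega
  rcases (hadj x y).1 hxy with h | h | h | h
  · exact key x y (Or.inl h)
  · rw [Sym2.eq_swap]; exact key y x (Or.inl h)
  · rw [Sym2.eq_swap]; exact key y x (Or.inr h)
  · exact key x y (Or.inr h)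

theorem cycle_even_bipartite (h : IsCycleOfLen H m) (hm : Even m) :
    ∃ f : Set W, ∀ p q, H.Adj p q → (p ∈ f ↔ q ∉ f) := by
  obtain ⟨i, -, -, -, hadj⟩ := exists_cycle_coord h
  obtain ⟨k, rfl⟩ := hm
  refine ⟨{z | i z % 2 = 0}, fun p q hpq => ?_⟩
  rw [hadj] at hpq
  simp only [Set.mem_ofPred_eq]
  omega

theorem cycle_odd_not_bipartite (h : IsCycleOfLen H m) (hm : Odd m) (f : Set W)
    (hf : ∀ p q, H.Adj p q → (p ∈ f ↔ q ∉ f)) : False := by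
  classical
  obtain ⟨h3, ⟨e⟩⟩ := h
  let C : (SimpleGraph.cycleGraph m).Coloring Bool :=
    SimpleGraph.Coloring.mk (fun j => decide (e.symm j ∈ f)) fun {j l} hjl => by
      have := hf _ _ (e.symm.map_adj_iff.2 hjl)
      by_cases h1 : e.symm j ∈ f <;> by_cases h2 : e.symm l ∈ f <;> simp_all
  have h2 := C.colorable.chromaticNumber_le
  rw [SimpleGraph.chromaticNumber_cycleGraph_of_odd m (by omega) hm] at h2
  simp at h2
  exact absurd h2 (by decide)

/-- Two vertices meet at most four edges, so on a cycle of length at least five some edge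
avoids both. -/
theorem cycle_exists_edge_avoiding (h : IsCycleOfLen H m) (hm : 5 ≤ m) (v b : W) :
    ∃ x y, H.Adj x y ∧ x ≠ v ∧ y ≠ v ∧ x ≠ b ∧ y ≠ b := by
  obtain ⟨i, hinj, hlt, hsurj, hadj⟩ := exists_cycle_coord h
  by_contra hc
  have key : ∀ t, t < m → ∀ s, s < m → (t + 1 = s ∨ (s = 0 ∧ t + 1 = m)) →
      t = i v ∨ s = i v ∨ t = i b ∨ s = i b := by
    intro t ht s hs hts
    obtain ⟨x, rfl⟩ := hsurj t ht
    obtain ⟨y, rfl⟩ := hsurj s hs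
    by_contra hne
    refine hc ⟨x, y, (hadj x y).2 (by omega), ?_, ?_, ?_, ?_⟩ <;> rintro rfl <;> simp at hne
  have h0 := key 0 (by omega) 1 (by omega) (by omega)
  have h1 := key 1 (by omega) 2 (by omega) (by omega)
  have h2 := key 2 (by omega) 3 (by omega) (by omega)
  have h3 := key 3 (by omega) 4 (by omega) (by omega)
  have h4 := key 4 (by omega) (if m = 5 then 0 else 5) (by split_ifs <;> omega)
    (by split_ifs <;> omega)
  split_ifs at h4 <;> omega

end Cycle

/-- In a union of two cycles overlapping in the path `a b c`, where the second cycle is even,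
deleting an edge of the first cycle that avoids `b` leaves a bipartite graph: the bipartitions of
the two pieces can be normalised to agree at `b`, and then agree at `a` and `c`. -/
theorem glued_delete_bipartite (G : SimpleGraph V) {m l : ℕ} {V1 V2 : Set V} {a b c : V}
    (hinter : V1 ∩ V2 = {a, b, c})
    (hedges : ∀ x y, G.Adj x y → ((x ∈ V1 ∧ y ∈ V1) ∨ (x ∈ V2 ∧ y ∈ V2)))
    (h1 : IsCycleOfLen (G.induce V1) m) (h2 : IsCycleOfLen (G.induce V2) l) (hl : Even l)
    (hGab : G.Adj a b) (hGbc : G.Adj b c) {x y : V} (hx : x ∈ V1) (hy : y ∈ V1)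
    (hxy : G.Adj x y) (hxb : x ≠ b) (hyb : y ≠ b) :
    ∃ f : Set V, ∀ p q, G.Adj p q → s(p, q) ≠ s(x, y) → (p ∈ f ↔ q ∉ f) := by
  classical
  have hmem : ∀ z, (z ∈ V1 ∧ z ∈ V2) ↔ (z = a ∨ z = b ∨ z = c) := fun z => by
    rw [← Set.mem_inter_iff, hinter]; simp
  obtain ⟨ha1, ha2⟩ := (hmem a).2 (by simp)
  obtain ⟨hb1, hb2⟩ := (hmem b).2 (by simp)
  obtain ⟨hc1, hc2⟩ := (hmem c).2 (by simp)
  obtain ⟨f1, hf1⟩ := cycle_delete_bipartite h1 (x := ⟨x, hx⟩) (y := ⟨y, hy⟩) hxy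
  obtain ⟨f2, hf2⟩ := cycle_even_bipartite h2 hl
  have g1 : ∀ p q (hp : p ∈ V1) (hq : q ∈ V1), G.Adj p q → s(p, q) ≠ s(x, y) →
      ((⟨p, hp⟩ : V1) ∈ f1 ↔ (⟨q, hq⟩ : V1) ∉ f1) := fun p q hp hq hpq hne =>
    hf1 ⟨p, hp⟩ ⟨q, hq⟩ hpq fun h => hne (by simpa using congrArg (Sym2.map Subtype.val) h)
  have g2 : ∀ p q (hp : p ∈ V2) (hq : q ∈ V2), G.Adj p q →
      ((⟨p, hp⟩ : V2) ∈ f2 ↔ (⟨q, hq⟩ : V2) ∉ f2) := fun p q hp hq hpq =>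
    hf2 ⟨p, hp⟩ ⟨q, hq⟩ hpq
  -- Membership relative to `b`, which flips the second bipartition when necessary.
  let P1 : V → Prop := fun z => ∃ hz : z ∈ V1, ((⟨z, hz⟩ : V1) ∈ f1 ↔ (⟨b, hb1⟩ : V1) ∈ f1)
  let P2 : V → Prop := fun z => ∃ hz : z ∈ V2, ((⟨z, hz⟩ : V2) ∈ f2 ↔ (⟨b, hb2⟩ : V2) ∈ f2)
  have p1 : ∀ z (hz : z ∈ V1), P1 z ↔ ((⟨z, hz⟩ : V1) ∈ f1 ↔ (⟨b, hb1⟩ : V1) ∈ f1) :=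
    fun z hz => ⟨fun ⟨_, h⟩ => h, fun h => ⟨hz, h⟩⟩
  have p2 : ∀ z (hz : z ∈ V2), P2 z ↔ ((⟨z, hz⟩ : V2) ∈ f2 ↔ (⟨b, hb2⟩ : V2) ∈ f2) :=
    fun z hz => ⟨fun ⟨_, h⟩ => h, fun h => ⟨hz, h⟩⟩
  have agree : ∀ z, z ∈ V1 → z ∈ V2 → (P1 z ↔ P2 z) := by
    intro z hz1 hz2
    rw [p1 z hz1, p2 z hz2]
    have hnb : ∀ w, s(w, b) ≠ s(x, y) := fun w h => by
      rcases Sym2.eq_iff.1 h with ⟨-, h⟩ | ⟨-, h⟩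
      · exact hyb h.symm
      · exact hxb h.symm
    rcases (hmem z).1 ⟨hz1, hz2⟩ with rfl | rfl | rfl
    · have e1 := g1 z b hz1 hb1 hGab (hnb z)
      have e2 := g2 z b hz2 hb2 hGab
      tauto
    · tauto
    · have e1 := g1 z b hz1 hb1 hGbc.symm (hnb z)
      have e2 := g2 z b hz2 hb2 hGbc.symm
      tauto
  refine ⟨{z | P1 z ∨ P2 z}, fun p q hpq hne => ?_⟩
  have r1 : ∀ z, z ∈ V1 → (P1 z ∨ P2 z ↔ P1 z) := fun z hz =>
    ⟨fun h => h.elim id fun h => (agree z hz h.1).2 h, Or.inl⟩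
  have r2 : ∀ z, z ∈ V2 → (P1 z ∨ P2 z ↔ P2 z) := fun z hz =>
    ⟨fun h => h.elim (fun h => (agree z h.1 hz).1 h) id, Or.inr⟩
  simp only [Set.mem_ofPred_eq]
  rcases hedges p q hpq with ⟨hp, hq⟩ | ⟨hp, hq⟩
  · rw [r1 p hp, r1 q hq, p1 p hp, p1 q hq]
    have := g1 p q hp hq hpq hne
    tauto
  · rw [r2 p hp, r2 q hq, p2 p hp, p2 q hq]
    have := g2 p q hp hq hpq
    tauto

/-- A vertex `v` all of whose neighbours lie in an induced cycle through it has degree two. -/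
theorem neighbors_of_cycle (G : SimpleGraph V) {m : ℕ} {V1 : Set V}
    (h1 : IsCycleOfLen (G.induce V1) m) {v : V} (hv : v ∈ V1) (hN : ∀ z, G.Adj v z → z ∈ V1)
    {u : V} (hu : G.Adj v u) : ∃ w, u ≠ w ∧ ∀ z, G.Adj v z ↔ z = u ∨ z = w := by
  obtain ⟨⟨s, hs⟩, ⟨t, ht⟩, hst, hz⟩ := cycle_neighbors h1 ⟨v, hv⟩
  have key : ∀ z, G.Adj v z ↔ z = s ∨ z = t := by
    intro z
    constructor
    · intro h
      simpa using (hz ⟨z, hN z h⟩).1 h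
    · rintro (rfl | rfl)
      · exact (hz ⟨z, hs⟩).2 (Or.inl rfl)
      · exact (hz ⟨z, ht⟩).2 (Or.inr rfl)
  have hst' : s ≠ t := fun h => hst (Subtype.ext h)
  rcases (key u).1 hu with rfl | rfl
  · exact ⟨t, hst', key⟩
  · exact ⟨s, hst'.symm, fun z => by rw [key, or_comm]⟩

/-- For `G = C_{2n+1} #_{P₂} C_{2k}` (`n, k ≥ 2`), obtained by gluing
an odd cycle of length `2n+1` and an even cycle of length `2k` along a common path
`a b c` of two edges, one has `m(G) = 3`. -/
theorem odd_even_cycle_p2_sum_m {V : Type} [Fintype V] (G : SimpleGraph V)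
    (n k : ℕ) (hn : 2 ≤ n) (hk : 2 ≤ k)
    (V1 V2 : Set V) (a b c : V)
    (hab : a ≠ b) (hbc : b ≠ c) (hac : a ≠ c)
    (hcover : V1 ∪ V2 = Set.univ) (hinter : V1 ∩ V2 = {a, b, c})
    (hedges : ∀ x y, G.Adj x y → ((x ∈ V1 ∧ y ∈ V1) ∨ (x ∈ V2 ∧ y ∈ V2)))
    (h1 : IsCycleOfLen (G.induce V1) (2 * n + 1))
    (h2 : IsCycleOfLen (G.induce V2) (2 * k))
    (hGab : G.Adj a b) (hGbc : G.Adj b c) :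
    IsLeast (cutDegrees G) 3 := by
  classical
  have hmem : ∀ z, (z ∈ V1 ∧ z ∈ V2) ↔ (z = a ∨ z = b ∨ z = c) := fun z => by
    rw [← Set.mem_inter_iff, hinter]; simp
  obtain ⟨ha1, ha2⟩ := (hmem a).2 (by simp)
  obtain ⟨hb1, hb2⟩ := (hmem b).2 (by simp)
  obtain ⟨hc1, hc2⟩ := (hmem c).2 (by simp)
  have tri1 : ∀ p q r, p ∈ V1 → q ∈ V1 → r ∈ V1 → G.Adj p q → G.Adj q r → G.Adj p r → False :=
    fun p q r hp hq hr e1 e2 e3 => cycle_no_triangle h1 (by omega)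
      (p := ⟨p, hp⟩) (q := ⟨q, hq⟩) (r := ⟨r, hr⟩) e1 e2 e3
  have hnac : ¬ G.Adj a c := fun h => tri1 a b c ha1 hb1 hc1 hGab hGbc h
  constructor
  · -- A vertex of degree two, with one marked neighbour, satisfies the local condition.
    have main : ∀ v u, (v = b ∨ ¬ (v ∈ V1 ∧ v ∈ V2)) → G.Adj v u → LocalAt G v u := by
      intro v u hv hu
      obtain ⟨w, huw, hz⟩ : ∃ w, u ≠ w ∧ ∀ z, G.Adj v z ↔ z = u ∨ z = w := by
        by_cases hvb : v = b
        · subst hvb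
          refine neighbors_of_cycle G h1 hb1 (fun z hz => ?_) hu
          rcases hedges _ _ hz with h | h
          · exact h.2
          · -- In the second cycle too, the two neighbours of `b` are `a` and `c`.
            obtain ⟨⟨s, hs⟩, ⟨t, ht⟩, -, hst⟩ := cycle_neighbors h2 ⟨v, hb2⟩
            have ea := (hst ⟨a, ha2⟩).1 hGab.symm
            have ec := (hst ⟨c, hc2⟩).1 hGbc
            have ez := (hst ⟨z, h.2⟩).1 hz
            simp only [Subtype.mk.injEq] at ea ec ez
            have : z = a ∨ z = c := by grind
            rcases this with rfl | rfl <;> assumption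
        · have hv' : ¬ (v ∈ V1 ∧ v ∈ V2) := hv.resolve_left hvb
          have hcov : v ∈ V1 ∪ V2 := hcover ▸ Set.mem_univ v
          rcases hcov with hv1 | hv2
          · exact neighbors_of_cycle G h1 hv1
              (fun z hz => (hedges _ _ hz).elim (·.2) fun h => absurd ⟨hv1, h.1⟩ hv') hu
          · exact neighbors_of_cycle G h2 hv2
              (fun z hz => (hedges _ _ hz).elim (fun h => absurd ⟨h.1, hv2⟩ hv') (·.2)) hu
      have hw : G.Adj v w := (hz w).2 (Or.inr rfl)
      obtain ⟨x, y, hx, hy, hxy, hxv, hyv, hxb, hyb⟩ : ∃ x y, x ∈ V1 ∧ y ∈ V1 ∧ G.Adj x y ∧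
          x ≠ v ∧ y ≠ v ∧ x ≠ b ∧ y ≠ b := by
        by_cases hv1 : v ∈ V1
        · obtain ⟨⟨x, hx⟩, ⟨y, hy⟩, hxy, e1, e2, e3, e4⟩ :=
            cycle_exists_edge_avoiding h1 (by omega) ⟨v, hv1⟩ ⟨b, hb1⟩
          exact ⟨x, y, hx, hy, hxy, by simpa using e1, by simpa using e2, by simpa using e3,
            by simpa using e4⟩
        · obtain ⟨⟨x, hx⟩, ⟨y, hy⟩, hxy, e1, e2, -, -⟩ :=
            cycle_exists_edge_avoiding h1 (by omega) ⟨b, hb1⟩ ⟨b, hb1⟩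
          exact ⟨x, y, hx, hy, hxy, fun h => hv1 (h ▸ hx), fun h => hv1 (h ▸ hy),
            by simpa using e1, by simpa using e2⟩
      obtain ⟨f, hf⟩ := glued_delete_bipartite G hinter hedges h1 h2 (even_two_mul k) hGab hGbc
        hx hy hxy hxb hyb
      -- If `xy = uw`, then `v x y` is a triangle, which neither cycle contains.
      have hne : s(x, y) ≠ s(u, w) := by
        intro h
        have hvxy : G.Adj v x ∧ G.Adj v y := by
          rcases Sym2.eq_iff.1 h with ⟨rfl, rfl⟩ | ⟨rfl, rfl⟩
          · exact ⟨hu, hw⟩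
          · exact ⟨hw, hu⟩
        by_cases hv1 : v ∈ V1
        · exact tri1 v x y hv1 hx hy hvxy.1 hxy hvxy.2
        · have hx2 : x ∈ V2 := (hedges _ _ hvxy.1).elim (fun h => absurd h.1 hv1) (·.2)
          have hy2 : y ∈ V2 := (hedges _ _ hvxy.2).elim (fun h => absurd h.1 hv1) (·.2)
          have ex := (hmem x).1 ⟨hx, hx2⟩
          have ey := (hmem y).1 ⟨hy, hy2⟩
          have hne := hxy.ne
          rcases ex with rfl | rfl | rfl
          · rcases ey with rfl | rfl | rfl
            · exact hne rfl
            · exact hyb rfl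
            · exact hnac hxy
          · exact hxb rfl
          · rcases ey with rfl | rfl | rfl
            · exact hnac hxy.symm
            · exact hyb rfl
            · exact hne rfl
      exact ⟨w, x, y, f, huw, hz, hxv, hyv, hxy.ne, hne, hf⟩
    refine three_mem_cutDegrees G hGab fun p q hpq => ?_
    by_cases hp : p = b ∨ ¬ (p ∈ V1 ∧ p ∈ V2)
    · exact Or.inl (main p q hp hpq)
    by_cases hq : q = b ∨ ¬ (q ∈ V1 ∧ q ∈ V2)
    · exact Or.inr (main q p hq hpq.symm)
    -- Otherwise both endpoints lie in `{a, c}`, but `a` and `c` are not adjacent.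
    exfalso
    push Not at hp hq
    have ep := (hmem p).1 hp.2
    have eq := (hmem q).1 hq.2
    have hne := hpq.ne
    rcases ep with rfl | rfl | rfl
    · rcases eq with rfl | rfl | rfl
      · exact hne rfl
      · exact hq.1 rfl
      · exact hnac hpq
    · exact hp.1 rfl
    · rcases eq with rfl | rfl | rfl
      · exact hnac hpq.symm
      · exact hq.1 rfl
      · exact hne rfl
  · intro α hα
    by_contra hlt
    obtain ⟨A, hA⟩ := bipartite_of_small_degree G hα (by omega)
    exact cycle_odd_not_bipartite h1 (odd_two_mul_add_one n) {z | z.1 ∈ A}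
      fun p q hpq => hA p.1 q.1 hpq
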